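/- (Hölder inequality for mixed-norm Herz spaces.) Let n ∈ ℕ, p⃗, q⃗ ∈ [1,∞]^n and α⃗ ∈ ℝⁿ. Then for all measurable f, g : ℝⁿ → ℂ, ∫_{ℝⁿ} |f(x) g(x)| dx ≤ ‖f‖_{Ė^{α⃗,p⃗}_{q⃗}(ℝⁿ)} ‖g‖_{Ė^{-α⃗,p⃗'}_{q⃗'}(ℝⁿ)}. -/

import Mathlib

open MeasureTheory ENNReal Filter

noncomputable section

/-- The dyadic annulus `R_k = (-2^k, 2^k) \ (-2^(k-1), 2^(k-1))` in `ℝ`. -/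
def herzRing (k : ℤ) : Set ℝ :=
  Set.Ioo (-(2 : ℝ) ^ k) ((2 : ℝ) ^ k) \ Set.Ioo (-(2 : ℝ) ^ (k - 1)) ((2 : ℝ) ^ (k - 1))

/-- The `L^q` "norm" (valued in `ℝ≥0∞`) of an `ℝ≥0∞`-valued function on a set `s ⊆ ℝ`,
with the usual modification when `q = ∞`. -/
def lqNormOn (q : ℝ≥0∞) (s : Set ℝ) (g : ℝ → ℝ≥0∞) : ℝ≥0∞ :=
  if q = ∞ then essSup (s.indicator g) volume
  else (∫⁻ x in s, g x ^ q.toReal) ^ (1 / q.toReal)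

/-- The `l^p` norm over `ℤ` of an `ℝ≥0∞`-valued sequence, with the usual modification
when `p = ∞`. -/
def lpZNorm (p : ℝ≥0∞) (a : ℤ → ℝ≥0∞) : ℝ≥0∞ :=
  if p = ∞ then ⨆ k, a k
  else (∑' k : ℤ, a k ^ p.toReal) ^ (1 / p.toReal)

/-- The one-dimensional Herz norm `K^{α,p}_q` of an `ℝ≥0∞`-valued function on `ℝ`. -/
def herzNorm1 (α : ℝ) (p q : ℝ≥0∞) (g : ℝ → ℝ≥0∞) : ℝ≥0∞ :=
  lpZNorm p fun k => ENNReal.ofReal ((2 : ℝ) ^ ((k : ℝ) * α)) * lqNormOn q (herzRing k) g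

/-- The mixed-norm Herz norm on `ℝⁿ` of an `ℝ≥0∞`-valued function: the Herz norm
`K^{α_1,p_1}_{q_1}` is applied in the first variable, then `K^{α_2,p_2}_{q_2}` in the
second variable, …, and finally `K^{α_n,p_n}_{q_n}` in the last variable. -/
def mixedHerzNormE : (n : ℕ) → (Fin n → ℝ) → (Fin n → ℝ≥0∞) → (Fin n → ℝ≥0∞) →
    ((Fin n → ℝ) → ℝ≥0∞) → ℝ≥0∞
  | 0, _, _, _, f => f fun i => i.elim0
  | n + 1, α, p, q, f =>
    herzNorm1 (α (Fin.last n)) (p (Fin.last n)) (q (Fin.last n)) fun xlast =>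
      mixedHerzNormE n (Fin.init α) (Fin.init p) (Fin.init q) fun y => f (Fin.snoc y xlast)

/-- The mixed-norm Herz norm `‖f‖_{Ė^{α,p}_q(ℝⁿ)}` of a complex-valued function on `ℝⁿ`. -/
def herzNormC (n : ℕ) (α : Fin n → ℝ) (p q : Fin n → ℝ≥0∞) (f : (Fin n → ℝ) → ℂ) : ℝ≥0∞ :=
  mixedHerzNormE n α p q fun x => (‖f x‖₊ : ℝ≥0∞)

/-- `I_m = (-2^m, -2^{-m}] ∪ [2^{-m}, 2^m)`. -/
def herzI (m : ℕ) : Set ℝ :=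
  Set.Ioc (-(2 : ℝ) ^ (m : ℤ)) (-(2 : ℝ) ^ (-(m : ℤ))) ∪
    Set.Ico ((2 : ℝ) ^ (-(m : ℤ))) ((2 : ℝ) ^ (m : ℤ))

/-- `A_m = I_m^n ⊆ ℝⁿ`. -/
def herzA (n m : ℕ) : Set (Fin n → ℝ) := Set.univ.pi fun _ => herzI m

/-- The class `H(ℝⁿ)` of simple functions built from finitely many pairwise disjoint
parallelepipeds contained in some `A_m`. -/
def IsHSimple (n : ℕ) (f : (Fin n → ℝ) → ℂ) : Prop :=
  ∃ (m N : ℕ) (a : Fin N → ℂ) (E : Fin N → Fin n → Set ℝ),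
    (∀ k i, MeasurableSet (E k i)) ∧
    (∀ k, Set.univ.pi (E k) ⊆ herzA n m) ∧
    (Pairwise fun k l => Disjoint (Set.univ.pi (E k)) (Set.univ.pi (E l))) ∧
    f = fun x => ∑ k, (Set.univ.pi (E k)).indicator (fun _ => a k) x

/-- The Euclidean ball `B(x,r)` in `ℝⁿ`. -/
def eucBall (n : ℕ) (x : Fin n → ℝ) (r : ℝ) : Set (Fin n → ℝ) :=
  {y | ∑ i, (y i - x i) ^ 2 < r ^ 2}

/-- The (uncentered) maximal operator in the `k`-th variable. -/
def maxVar (n : ℕ) (k : Fin n) (g : (Fin n → ℝ) → ℝ≥0∞) : (Fin n → ℝ) → ℝ≥0∞ :=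
  fun x => ⨆ (a : ℝ) (b : ℝ) (_ : x k ∈ Set.Ioo a b),
    (volume (Set.Ioo a b))⁻¹ * ∫⁻ y in Set.Ioo a b, g (Function.update x k y)

/-- The centered Hardy–Littlewood maximal operator on `ℝⁿ`. -/
def centeredMax (n : ℕ) (g : (Fin n → ℝ) → ℝ≥0∞) : (Fin n → ℝ) → ℝ≥0∞ :=
  fun x => ⨆ (r : ℝ) (_ : 0 < r),
    (volume (eucBall n x r))⁻¹ * ∫⁻ y in eucBall n x r, g y

/-- The composition `M_n ∘ ⋯ ∘ M_1` of the maximal operators in each variable. -/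
def iteratedMax (n : ℕ) (g : (Fin n → ℝ) → ℝ≥0∞) : (Fin n → ℝ) → ℝ≥0∞ :=
  (List.ofFn fun k : Fin n => maxVar n k).foldl (fun h F => F h) g

/-- The iterated maximal operator `ℳ_t(f) = [M_n ⋯ M_1(|f|^t)]^{1/t}`. -/
def iterMaxPow (n : ℕ) (t : ℝ) (f : (Fin n → ℝ) → ℂ) : (Fin n → ℝ) → ℝ≥0∞ :=
  fun x => iteratedMax n (fun y => (‖f y‖₊ : ℝ≥0∞) ^ t) x ^ (1 / t)

/-- The `l^r`-Herz type mixed norm of a sequence of functions on `ℝⁿ`. -/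
def herzSeqNorm (n : ℕ) (r : ℝ≥0∞) (α : Fin n → ℝ) (p q : Fin n → ℝ≥0∞)
    (F : ℤ → (Fin n → ℝ) → ℂ) : ℝ≥0∞ :=
  mixedHerzNormE n α p q fun x => lpZNorm r fun j => (‖F j x‖₊ : ℝ≥0∞)

/-- `N` is a ball quasi-Banach function norm on (nonnegative extended-real-valued)
measurable functions on `ℝⁿ`. -/
def IsBQBFNorm (n : ℕ) (N : ((Fin n → ℝ) → ℝ≥0∞) → ℝ≥0∞) : Prop :=
  (∀ f : (Fin n → ℝ) → ℝ≥0∞, Measurable f → N f = 0 → f =ᵐ[volume] 0) ∧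
  (∀ f g : (Fin n → ℝ) → ℝ≥0∞, Measurable f → Measurable g →
    (∀ᵐ x ∂volume, g x ≤ f x) → N g ≤ N f) ∧
  (∀ (fm : ℕ → (Fin n → ℝ) → ℝ≥0∞) (f : (Fin n → ℝ) → ℝ≥0∞),
    (∀ m, Measurable (fm m)) → Measurable f →
    (∀ᵐ x ∂volume, Monotone (fun m => fm m x) ∧
      Tendsto (fun m => fm m x) atTop (nhds (f x))) →
    Monotone (fun m => N (fm m)) ∧ Tendsto (fun m => N (fm m)) atTop (nhds (N f))) ∧
  (∀ (x : Fin n → ℝ) (r : ℝ), 0 < r →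
    N ((eucBall n x r).indicator fun _ => (1 : ℝ≥0∞)) ≠ ∞)

/-- `N` is a ball Banach function norm: a ball quasi-Banach function norm that moreover
satisfies the triangle inequality and locally dominates the `L¹` norm. -/
def IsBallBanachNorm (n : ℕ) (N : ((Fin n → ℝ) → ℝ≥0∞) → ℝ≥0∞) : Prop :=
  IsBQBFNorm n N ∧
  (∀ f g : (Fin n → ℝ) → ℝ≥0∞, Measurable f → Measurable g → N (f + g) ≤ N f + N g) ∧
  (∀ (x : Fin n → ℝ) (r : ℝ), 0 < r → ∃ C : ℝ≥0∞, 0 < C ∧ C ≠ ∞ ∧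
    ∀ f : (Fin n → ℝ) → ℝ≥0∞, Measurable f → (∫⁻ y in eucBall n x r, f y) ≤ C * N f)

/-- The associate (Köthe dual) norm of a function norm `N`. -/
def assocNormOf (n : ℕ) (N : ((Fin n → ℝ) → ℝ≥0∞) → ℝ≥0∞)
    (f : (Fin n → ℝ) → ℝ≥0∞) : ℝ≥0∞ :=
  ⨆ (g : (Fin n → ℝ) → ℝ≥0∞) (_ : Measurable g) (_ : N g = 1), ∫⁻ x, f x * g x

/-- The `θ`-convexification of a function norm: `‖f‖_{X^θ} = ‖|f|^θ‖_X^{1/θ}`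
(here stated with `θ` in place of `1/p`, so `X^{1/p}` is `convexPow n (1/p) N`). -/
def convexPow (n : ℕ) (θ : ℝ) (N : ((Fin n → ℝ) → ℝ≥0∞) → ℝ≥0∞)
    (f : (Fin n → ℝ) → ℝ≥0∞) : ℝ≥0∞ :=
  N (fun x => f x ^ θ) ^ (1 / θ)

/-- The associate space norm of the mixed-norm Herz space, for complex-valued functions. -/
def herzAssocNormC (n : ℕ) (α : Fin n → ℝ) (p q : Fin n → ℝ≥0∞)
    (f : (Fin n → ℝ) → ℂ) : ℝ≥0∞ :=
  ⨆ (g : (Fin n → ℝ) → ℂ) (_ : Measurable g) (_ : herzNormC n α p q g = 1),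
    ∫⁻ x, (‖f x * g x‖₊ : ℝ≥0∞)

def genNorm {X : Type*} [MeasurableSpace X] (μ : Measure X) (q : ℝ≥0∞) (f : X → ℝ≥0∞) : ℝ≥0∞ :=
  if q = ∞ then essSup f μ else (∫⁻ x, f x ^ q.toReal ∂μ) ^ (1 / q.toReal)

lemma genNorm_holder_top {X : Type*} [MeasurableSpace X] (μ : Measure X)
    (f g : X → ℝ≥0∞) (hg : AEMeasurable g μ) :
    ∫⁻ x, f x * g x ∂μ ≤ genNorm μ ∞ f * genNorm μ 1 g := by
  simp only [genNorm, if_true, ENNReal.one_ne_top, if_false, ENNReal.toReal_one,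
    ENNReal.rpow_one, div_one]
  rw [← lintegral_const_mul'' _ hg]
  refine lintegral_mono_ae ?_
  filter_upwards [ENNReal.ae_le_essSup (μ := μ) f] with x hx
  gcongr

lemma genNorm_holder {X : Type*} [MeasurableSpace X] (μ : Measure X) (q q' : ℝ≥0∞)
    (h : 1 / q + 1 / q' = 1)
    (f g : X → ℝ≥0∞) (hf : AEMeasurable f μ) (hg : AEMeasurable g μ) :
    ∫⁻ x, f x * g x ∂μ ≤ genNorm μ q f * genNorm μ q' g := by
  by_cases h1 : q = ∞
  · subst h1
    have : q' = 1 := by simpa using h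
    subst this
    exact genNorm_holder_top μ f g hg
  by_cases h2 : q' = ∞
  · subst h2
    have : q = 1 := by simpa using h
    subst this
    rw [mul_comm]
    simp_rw [mul_comm (f _)]
    exact genNorm_holder_top μ g f hf
  have hc : ENNReal.HolderConjugate q q' := by
    rw [ENNReal.holderConjugate_iff]; simpa using h
  have := ENNReal.lintegral_mul_le_Lp_mul_Lq μ
    (ENNReal.HolderConjugate.toReal_of_ne_top h1 h2) hf hg
  simpa [genNorm, h1, h2] using this

lemma measurableSet_herzRing (k : ℤ) : MeasurableSet (herzRing k) :=
  measurableSet_Ioo.diff measurableSet_Ioo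

lemma lqNormOn_eq (q : ℝ≥0∞) (k : ℤ) (g : ℝ → ℝ≥0∞) :
    lqNormOn q (herzRing k) g = genNorm (volume.restrict (herzRing k)) q g := by
  unfold lqNormOn genNorm
  rw [ENNReal.essSup_indicator_eq_essSup_restrict (measurableSet_herzRing k)]

lemma lpZNorm_eq (p : ℝ≥0∞) (a : ℤ → ℝ≥0∞) : lpZNorm p a = genNorm Measure.count p a := by
  unfold lpZNorm genNorm
  rw [lintegral_count, essSup_count_eq_ciSup (OrderTop.bddAbove _)]

lemma herzRing_cover (x : ℝ) (hx : x ≠ 0) : x ∈ ⋃ k, herzRing k := by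
  obtain ⟨n, h1, h2⟩ := exists_mem_Ico_zpow (abs_pos.2 hx) (one_lt_two (α := ℝ))
  refine Set.mem_iUnion.2 ⟨n + 1, ?_, ?_⟩
  · exact abs_lt.1 h2
  · intro h
    rw [add_sub_cancel_right] at h
    exact absurd (abs_lt.2 h) (not_lt.2 h1)

lemma lintegral_le_rings (F : ℝ → ℝ≥0∞) :
    ∫⁻ x, F x ≤ ∑' k, ∫⁻ x in herzRing k, F x := by
  have : (volume : Measure ℝ).restrict (⋃ k, herzRing k) = volume := by
    rw [Measure.restrict_eq_self_of_ae_mem]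
    have : ∀ᵐ x : ℝ, x ≠ 0 := by simp [ae_iff]
    filter_upwards [this] with x hx using herzRing_cover x hx
  calc _ = ∫⁻ x in ⋃ k, herzRing k, F x := by rw [this]
    _ ≤ _ := lintegral_iUnion_le _ _

lemma herz1_holder (α : ℝ) (p q p' q' : ℝ≥0∞)
    (hp : 1 / p + 1 / p' = 1) (hq : 1 / q + 1 / q' = 1)
    (f g : ℝ → ℝ≥0∞) (hf : Measurable f) (hg : Measurable g) :
    ∫⁻ x, f x * g x ≤ herzNorm1 α p q f * herzNorm1 (-α) p' q' g := by
  unfold herzNorm1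
  rw [lpZNorm_eq, lpZNorm_eq]
  refine le_trans ?_ (genNorm_holder _ p p' hp _ _ (measurable_of_countable _).aemeasurable
    (measurable_of_countable _).aemeasurable)
  rw [lintegral_count]
  refine (lintegral_le_rings _).trans (ENNReal.tsum_le_tsum fun k => ?_)
  have h1 : ENNReal.ofReal ((2 : ℝ) ^ ((k : ℝ) * α)) *
      ENNReal.ofReal ((2 : ℝ) ^ ((k : ℝ) * -α)) = 1 := by
    rw [← ENNReal.ofReal_mul (by positivity), ← Real.rpow_add two_pos]
    simp
  rw [mul_mul_mul_comm, h1, one_mul, lqNormOn_eq, lqNormOn_eq]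
  exact genNorm_holder _ q q' hq _ _ hf.aemeasurable hg.aemeasurable

lemma measurable_genNorm {X : Type*} [MeasurableSpace X] (μ : Measure ℝ) [SFinite μ] (q : ℝ≥0∞)
    (F : X → ℝ → ℝ≥0∞) (hF : Measurable (Function.uncurry F)) :
    Measurable fun x => genNorm μ q (F x) := by
  unfold genNorm
  split_ifs with h
  · refine measurable_of_Iic fun c => ?_
    have : (fun x => essSup (F x) μ) ⁻¹' Set.Iic c =
        {x | μ (Prod.mk x ⁻¹' (Function.uncurry F ⁻¹' Set.Ioi c)) = 0} := by
      ext x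
      simp only [Set.mem_preimage, Set.mem_Iic, Set.mem_ofPred_eq]
      have e : (μ (Prod.mk x ⁻¹' (Function.uncurry F ⁻¹' Set.Ioi c)) = 0) ↔
          ∀ᵐ y ∂μ, F x y ≤ c := by
        rw [ae_iff]
        have : {a | ¬ F x a ≤ c} = Prod.mk x ⁻¹' (Function.uncurry F ⁻¹' Set.Ioi c) := by
          ext y; simp
        rw [this]
      rw [e]
      constructor
      · intro hh
        filter_upwards [ENNReal.ae_le_essSup (μ := μ) (F x)] with y hy using hy.trans hh
      · intro hh
        exact essSup_le_of_ae_le c hh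
    rw [this]
    exact measurable_measure_prodMk_left (hF measurableSet_Ioi) (measurableSet_singleton 0)
  · have : Measurable (Function.uncurry fun x y => F x y ^ q.toReal) := hF.pow_const _
    exact (Measurable.lintegral_prod_right this).pow_const _

lemma measurable_herzNorm1 {X : Type*} [MeasurableSpace X] (α : ℝ) (p q : ℝ≥0∞)
    (F : X → ℝ → ℝ≥0∞) (hF : Measurable (Function.uncurry F)) :
    Measurable fun x => herzNorm1 α p q (F x) := by
  have h : ∀ k : ℤ, Measurable fun x => ENNReal.ofReal ((2 : ℝ) ^ ((k : ℝ) * α)) *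
      lqNormOn q (herzRing k) (F x) := fun k => by
    simp_rw [lqNormOn_eq]
    exact (measurable_genNorm _ q F hF).const_mul _
  unfold herzNorm1 lpZNorm
  split_ifs
  · exact Measurable.iSup h
  · exact (Measurable.tsum fun k => (h k).pow_const _).pow_const _

lemma measurable_snoc' (n : ℕ) :
    Measurable fun z : (Fin n → ℝ) × ℝ => (Fin.snoc z.1 z.2 : Fin (n + 1) → ℝ) := by
  refine measurable_pi_lambda _ fun i => ?_
  induction i using Fin.lastCases with
  | last => simpa using measurable_snd
  | cast i =>
    simp only [Fin.snoc_castSucc]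
    exact (measurable_pi_apply i).comp measurable_fst

lemma measurable_mixed (n : ℕ) : ∀ {X : Type} [MeasurableSpace X] (α : Fin n → ℝ)
    (p q : Fin n → ℝ≥0∞) (F : X → (Fin n → ℝ) → ℝ≥0∞) (_ : Measurable (Function.uncurry F)),
    Measurable fun x => mixedHerzNormE n α p q (F x) := by
  induction n with
  | zero =>
    intro X _ α p q F hF
    exact hF.comp (measurable_id.prodMk measurable_const)
  | succ n ih =>
    intro X _ α p q F hF
    simp only [mixedHerzNormE]
    refine measurable_herzNorm1 _ _ _ _ ?_
    refine ih (X := X × ℝ) (Fin.init α) (Fin.init p) (Fin.init q)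
      (fun z y => F z.1 (Fin.snoc y z.2)) ?_
    have : Measurable fun w : (X × ℝ) × (Fin n → ℝ) =>
        (w.1.1, (Fin.snoc w.2 w.1.2 : Fin (n + 1) → ℝ)) :=
      (measurable_fst.comp measurable_fst).prodMk
        ((measurable_snoc' n).comp (measurable_snd.prodMk (measurable_snd.comp measurable_fst)))
    exact hF.comp this

lemma lintegral_snoc (n : ℕ) (F : (Fin (n + 1) → ℝ) → ℝ≥0∞) (hF : Measurable F) :
    ∫⁻ x, F x = ∫⁻ t, ∫⁻ y : Fin n → ℝ, F (Fin.snoc y t) := by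
  have h := (volume_preserving_piFinSuccAbove (fun _ : Fin (n + 1) => ℝ) (Fin.last n)).symm
  have h2 : ∀ z : ℝ × (Fin n → ℝ),
      (MeasurableEquiv.piFinSuccAbove (fun _ : Fin (n + 1) => ℝ) (Fin.last n)).symm z
        = Fin.snoc z.2 z.1 := fun z => Fin.insertNth_last' z.1 z.2
  rw [← h.lintegral_comp hF, Measure.volume_eq_prod, lintegral_prod]
  · simp_rw [h2]
  · exact (hF.comp h.measurable).aemeasurable

lemma mixed_holder (n : ℕ) : ∀ (α : Fin n → ℝ) (p q p' q' : Fin n → ℝ≥0∞)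
    (_ : ∀ i, 1 / p i + 1 / p' i = 1) (_ : ∀ i, 1 / q i + 1 / q' i = 1)
    (f g : (Fin n → ℝ) → ℝ≥0∞) (_ : Measurable f) (_ : Measurable g),
    ∫⁻ x, f x * g x ≤ mixedHerzNormE n α p q f * mixedHerzNormE n (-α) p' q' g := by
  induction n with
  | zero =>
    intro α p q p' q' hp hq f g hf hg
    simp only [mixedHerzNormE]
    rw [lintegral_unique, volume_pi, Measure.pi_univ]
    simp only [Finset.univ_eq_empty, Finset.prod_empty, mul_one]
    exact le_of_eq (by congr 2 <;> exact Subsingleton.elim _ _)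
  | succ n ih =>
    intro α p q p' q' hp hq f g hf hg
    rw [lintegral_snoc n (fun x => f x * g x) (hf.mul hg)]
    simp only [mixedHerzNormE]
    have key : ∀ F : (Fin (n + 1) → ℝ) → ℝ≥0∞, Measurable F →
        Measurable (Function.uncurry fun (t : ℝ) (y : Fin n → ℝ) => F (Fin.snoc y t)) :=
      fun F hF => hF.comp ((measurable_snoc' n).comp measurable_swap)
    refine le_trans ?_ (herz1_holder (α (Fin.last n)) _ _ _ _ (hp _) (hq _) _ _
      (measurable_mixed n _ _ _ _ (key f hf)) (measurable_mixed n _ _ _ _ (key g hg)))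
    refine lintegral_mono fun t => ?_
    exact ih (Fin.init α) _ _ _ _ (fun i => hp _) (fun i => hq _) _ _
      ((key f hf).comp measurable_prodMk_left) ((key g hg).comp measurable_prodMk_left)

/-- Hölder inequality for mixed-norm Herz spaces. -/
theorem mixedHerz_holder (n : ℕ) (α : Fin n → ℝ) (p q p' q' : Fin n → ℝ≥0∞)
    (hp : ∀ i, 1 ≤ p i) (hq : ∀ i, 1 ≤ q i)
    (hp' : ∀ i, 1 / p i + 1 / p' i = 1) (hq' : ∀ i, 1 / q i + 1 / q' i = 1)
    (f g : (Fin n → ℝ) → ℂ) (hf : Measurable f) (hg : Measurable g) :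
    (∫⁻ x, (‖f x * g x‖₊ : ℝ≥0∞)) ≤
      herzNormC n α p q f * herzNormC n (-α) p' q' g := by
  have h := mixed_holder n α p q p' q' hp' hq' (fun x => (‖f x‖₊ : ℝ≥0∞))
    (fun x => (‖g x‖₊ : ℝ≥0∞)) (by fun_prop) (by fun_prop)
  simpa [herzNormC, nnnorm_mul] using h
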